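/- (Casimir conditions, 2-dimensional spatial domain.) Consider the closed loop of the plant $\dot{x}^\alpha = (\mathcal{J}^{\alpha\beta}-\mathcal{R}^{\alpha\beta})\delta_\beta\mathcal{H}[x] + \mathcal{G}^\alpha_\xi u^\xi$, $y_\xi = \mathcal{G}^\alpha_\xi\delta_\alpha\mathcal{H}[x]$ on the rectangle $B=[0,L_1]\times[0,L_2]$ (smooth data, $\alpha,\beta=1,\dots,n$, $\xi=1,\dots,l$) and the controller $\dot{x}_c^{\alpha_c} = (J_c^{\alpha_c\beta_c}-R_c^{\alpha_c\beta_c})\partial_{\beta_c}H_c(x_c) + G^{\alpha_c}_{c,\xi}u_c^\xi$, $y_{c,\xi} = G^{\beta_c}_{c,\xi}\partial_{\beta_c}H_c(x_c)$ ($J_c, R_c, G_c$ constant matrices), interconnected by $u_c^\xi = K^{\xi\eta}\iint_B y_\eta\,dz^1dz^2$, $u^\xi = -K^{\xi\eta}y_{c,\eta}$ with a constant matrix $K$. Fix $\lambda \in \{1,\dots,n_c\}$ and let $\mathcal{C}$ be a smooth second-order density. Assume, for all $t$ and all $(z^1,z^2)\in B$: (a) $J_c^{\lambda\beta_c}-R_c^{\lambda\beta_c}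 = 0$ for all $\beta_c$; (b) $\delta_\alpha\mathcal{C}[x]\,(\mathcal{J}^{\alpha\beta}-\mathcal{R}^{\alpha\beta}) + G^{\lambda}_{c,\xi}K^{\xi\eta}\mathcal{G}^\beta_\eta = 0$ for all $\beta$; (c) $\delta_\alpha\mathcal{C}[x]\,\mathcal{G}^\alpha_\xi K^{\xi\eta}G^{\alpha_c}_{c,\eta} = 0$ for all $\alpha_c$; (d) along the solution the boundary contributions of $\mathcal{C}$ vanish: on the edges $z^1\in\{0,L_1\}$, $\dot{x}^\alpha(\mathcal{C}^{[10]}_\alpha - \partial_1\mathcal{C}^{[20]}_\alpha - \partial_2\mathcal{C}^{[11]}_\alpha) + \dot{x}^\alpha_{[10]}\mathcal{C}^{[20]}_\alpha = 0$; on the edges $z^2\in\{0,L_2\}$, $\dot{x}^\alpha(\mathcal{C}^{[01]}_\alpha - \partial_2\mathcal{C}^{[02]}_\alpha - \partial_1\mathcal{C}^{[11]}_\alpha) + \dot{x}^\alpha_{[01]}\mathcal{C}^{[02]}_\alpha = 0$; and $\dot{x}^\alpha\mathcal{C}^{[11]}_\alpha = 0$ at the four corners. Then the functional $\mathscr{C}(t)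 = x_c^\lambda(t) + \iint_B\mathcal{C}[x](t,\cdot)\,dz^1dz^2$ is constant in $t$ along the closed-loop solution, i.e. it is a structural invariant (Casimir functional) of the closed loop. -/

import Mathlib

open MeasureTheory

/-- The jet space `(z¹, z², x, x_[10], x_[01], x_[20], x_[11], x_[02])`. -/
abbrev Jet2 (n : ℕ) :=
  ℝ × ℝ × (Fin n → ℝ) × (Fin n → ℝ) × (Fin n → ℝ) × (Fin n → ℝ) × (Fin n → ℝ) × (Fin n → ℝ)

/-- Time derivative of a field `f(t,z¹,z²)`. -/
noncomputable def pt2 {E : Type*} [NormedAddCommGroup E] [NormedSpace ℝ E]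
    (f : ℝ → ℝ → ℝ → E) : ℝ → ℝ → ℝ → E := fun t a b => deriv (fun s => f s a b) t

/-- Derivative `∂₁` with respect to `z¹`. -/
noncomputable def dz1 {E : Type*} [NormedAddCommGroup E] [NormedSpace ℝ E]
    (f : ℝ → ℝ → ℝ → E) : ℝ → ℝ → ℝ → E := fun t a b => deriv (fun s => f t s b) a

/-- Derivative `∂₂` with respect to `z²`. -/
noncomputable def dz2 {E : Type*} [NormedAddCommGroup E] [NormedSpace ℝ E]
    (f : ℝ → ℝ → ℝ → E) : ℝ → ℝ → ℝ → E := fun t a b => deriv (fun s => f t a s) b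

/-- Second-order jet of the field `x` at `(t, z¹, z²)`. -/
noncomputable def jet2 {n : ℕ} (x : ℝ → ℝ → ℝ → Fin n → ℝ) (t a b : ℝ) : Jet2 n :=
  (a, b, x t a b, dz1 x t a b, dz2 x t a b,
    dz1 (dz1 x) t a b, dz1 (dz2 x) t a b, dz2 (dz2 x) t a b)

/-- Composed partial derivative `(∂H/∂x^α)[x]`. -/
noncomputable def sl00 {n : ℕ} (H : Jet2 n → ℝ) (x : ℝ → ℝ → ℝ → Fin n → ℝ)
    (α : Fin n) : ℝ → ℝ → ℝ → ℝ :=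
  fun t a b => fderiv ℝ H (jet2 x t a b) (0, 0, Pi.single α 1, 0, 0, 0, 0, 0)

/-- Composed partial derivative `(∂H/∂x^α_[10])[x]`. -/
noncomputable def sl10 {n : ℕ} (H : Jet2 n → ℝ) (x : ℝ → ℝ → ℝ → Fin n → ℝ)
    (α : Fin n) : ℝ → ℝ → ℝ → ℝ :=
  fun t a b => fderiv ℝ H (jet2 x t a b) (0, 0, 0, Pi.single α 1, 0, 0, 0, 0)

/-- Composed partial derivative `(∂H/∂x^α_[01])[x]`. -/
noncomputable def sl01 {n : ℕ} (H : Jet2 n → ℝ) (x : ℝ → ℝ → ℝ → Fin n → ℝ)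
    (α : Fin n) : ℝ → ℝ → ℝ → ℝ :=
  fun t a b => fderiv ℝ H (jet2 x t a b) (0, 0, 0, 0, Pi.single α 1, 0, 0, 0)

/-- Composed partial derivative `(∂H/∂x^α_[20])[x]`. -/
noncomputable def sl20 {n : ℕ} (H : Jet2 n → ℝ) (x : ℝ → ℝ → ℝ → Fin n → ℝ)
    (α : Fin n) : ℝ → ℝ → ℝ → ℝ :=
  fun t a b => fderiv ℝ H (jet2 x t a b) (0, 0, 0, 0, 0, Pi.single α 1, 0, 0)

/-- Composed partial derivative `(∂H/∂x^α_[11])[x]`. -/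
noncomputable def sl11 {n : ℕ} (H : Jet2 n → ℝ) (x : ℝ → ℝ → ℝ → Fin n → ℝ)
    (α : Fin n) : ℝ → ℝ → ℝ → ℝ :=
  fun t a b => fderiv ℝ H (jet2 x t a b) (0, 0, 0, 0, 0, 0, Pi.single α 1, 0)

/-- Composed partial derivative `(∂H/∂x^α_[02])[x]`. -/
noncomputable def sl02 {n : ℕ} (H : Jet2 n → ℝ) (x : ℝ → ℝ → ℝ → Fin n → ℝ)
    (α : Fin n) : ℝ → ℝ → ℝ → ℝ :=
  fun t a b => fderiv ℝ H (jet2 x t a b) (0, 0, 0, 0, 0, 0, 0, Pi.single α 1)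

/-- Variational derivative `δ_α H[x]` on the two-dimensional spatial domain. -/
noncomputable def varDer2 {n : ℕ} (H : Jet2 n → ℝ) (x : ℝ → ℝ → ℝ → Fin n → ℝ)
    (α : Fin n) : ℝ → ℝ → ℝ → ℝ :=
  fun t a b =>
    sl00 H x α t a b - dz1 (sl10 H x α) t a b - dz2 (sl01 H x α) t a b
      + dz1 (dz1 (sl20 H x α)) t a b + dz1 (dz2 (sl11 H x α)) t a b
      + dz2 (dz2 (sl02 H x α)) t a b

/-- Boundary contribution on edges with normal direction `z¹`:
`ẋ^α (H^[10]_α - ∂₁H^[20]_α - ∂₂H^[11]_α) + ẋ^α_[10] H^[20]_α` (summed over `α`). -/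
noncomputable def edge1 {n : ℕ} (H : Jet2 n → ℝ) (x : ℝ → ℝ → ℝ → Fin n → ℝ) :
    ℝ → ℝ → ℝ → ℝ :=
  fun t a b =>
    ∑ α : Fin n,
      (pt2 x t a b α * (sl10 H x α t a b - dz1 (sl20 H x α) t a b - dz2 (sl11 H x α) t a b)
        + pt2 (dz1 x) t a b α * sl20 H x α t a b)

/-- Boundary contribution on edges with normal direction `z²`:
`ẋ^α (H^[01]_α - ∂₂H^[02]_α - ∂₁H^[11]_α) + ẋ^α_[01] H^[02]_α` (summed over `α`). -/
noncomputable def edge2 {n : ℕ} (H : Jet2 n → ℝ) (x : ℝ → ℝ → ℝ → Fin n → ℝ) :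
    ℝ → ℝ → ℝ → ℝ :=
  fun t a b =>
    ∑ α : Fin n,
      (pt2 x t a b α * (sl01 H x α t a b - dz2 (sl02 H x α) t a b - dz1 (sl11 H x α) t a b)
        + pt2 (dz2 x) t a b α * sl02 H x α t a b)

/-- Corner contribution `ẋ^α H^[11]_α` (summed over `α`). -/
noncomputable def corner2 {n : ℕ} (H : Jet2 n → ℝ) (x : ℝ → ℝ → ℝ → Fin n → ℝ) :
    ℝ → ℝ → ℝ → ℝ :=
  fun t a b => ∑ α : Fin n, pt2 x t a b α * sl11 H x α t a b

/-- Gradient component `∂_{β_c} H_c (x_c(t))` of the controller Hamiltonian. -/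
noncomputable def gradC {nc : ℕ} (Hc : (Fin nc → ℝ) → ℝ) (xc : ℝ → Fin nc → ℝ)
    (βc : Fin nc) (t : ℝ) : ℝ :=
  fderiv ℝ Hc (xc t) (Pi.single βc 1)

/-- Joint smoothness of a field. -/
def Smooth3 {E : Type*} [NormedAddCommGroup E] [NormedSpace ℝ E] (f : ℝ → ℝ → ℝ → E) : Prop :=
  ContDiff ℝ (⊤ : ℕ∞) (fun q : ℝ × ℝ × ℝ => f q.1 q.2.1 q.2.2)

section Aux

variable {E : Type*} [NormedAddCommGroup E] [NormedSpace ℝ E]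

lemma Smooth3.hasDeriv0 {f : ℝ → ℝ → ℝ → E} (hf : Smooth3 f) (t a b : ℝ) :
    HasDerivAt (fun s => f s a b)
      (fderiv ℝ (fun q : ℝ × ℝ × ℝ => f q.1 q.2.1 q.2.2) (t, a, b) (1, 0, 0)) t := by
  have h1 : HasFDerivAt (fun q : ℝ × ℝ × ℝ => f q.1 q.2.1 q.2.2) _ (t, a, b) :=
    ((ContDiff.differentiable hf (by simp)) (t, a, b)).hasFDerivAt
  have h2 : HasDerivAt (fun s : ℝ => (s, a, b)) ((1 : ℝ), (0 : ℝ), (0 : ℝ)) t :=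
    (hasDerivAt_id t).prodMk ((hasDerivAt_const t a).prodMk (hasDerivAt_const t b))
  exact h1.comp_hasDerivAt t h2

lemma Smooth3.hasDeriv1 {f : ℝ → ℝ → ℝ → E} (hf : Smooth3 f) (t a b : ℝ) :
    HasDerivAt (fun s => f t s b)
      (fderiv ℝ (fun q : ℝ × ℝ × ℝ => f q.1 q.2.1 q.2.2) (t, a, b) (0, 1, 0)) a := by
  have h1 : HasFDerivAt (fun q : ℝ × ℝ × ℝ => f q.1 q.2.1 q.2.2) _ (t, a, b) :=
    ((ContDiff.differentiable hf (by simp)) (t, a, b)).hasFDerivAt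
  have h2 : HasDerivAt (fun s : ℝ => (t, s, b)) ((0 : ℝ), (1 : ℝ), (0 : ℝ)) a :=
    (hasDerivAt_const a t).prodMk ((hasDerivAt_id a).prodMk (hasDerivAt_const a b))
  exact h1.comp_hasDerivAt a h2

lemma Smooth3.hasDeriv2 {f : ℝ → ℝ → ℝ → E} (hf : Smooth3 f) (t a b : ℝ) :
    HasDerivAt (fun s => f t a s)
      (fderiv ℝ (fun q : ℝ × ℝ × ℝ => f q.1 q.2.1 q.2.2) (t, a, b) (0, 0, 1)) b := by
  have h1 : HasFDerivAt (fun q : ℝ × ℝ × ℝ => f q.1 q.2.1 q.2.2) _ (t, a, b) :=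
    ((ContDiff.differentiable hf (by simp)) (t, a, b)).hasFDerivAt
  have h2 : HasDerivAt (fun s : ℝ => (t, a, s)) ((0 : ℝ), (0 : ℝ), (1 : ℝ)) b :=
    (hasDerivAt_const b t).prodMk ((hasDerivAt_const b a).prodMk (hasDerivAt_id b))
  exact h1.comp_hasDerivAt b h2

lemma Smooth3.pt2_eq {f : ℝ → ℝ → ℝ → E} (hf : Smooth3 f) : pt2 f = fun t a b =>
    fderiv ℝ (fun q : ℝ × ℝ × ℝ => f q.1 q.2.1 q.2.2) (t, a, b) (1, 0, 0) := by
  funext t a b; exact (hf.hasDeriv0 t a b).deriv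

lemma Smooth3.dz1_eq {f : ℝ → ℝ → ℝ → E} (hf : Smooth3 f) : dz1 f = fun t a b =>
    fderiv ℝ (fun q : ℝ × ℝ × ℝ => f q.1 q.2.1 q.2.2) (t, a, b) (0, 1, 0) := by
  funext t a b; exact (hf.hasDeriv1 t a b).deriv

lemma Smooth3.dz2_eq {f : ℝ → ℝ → ℝ → E} (hf : Smooth3 f) : dz2 f = fun t a b =>
    fderiv ℝ (fun q : ℝ × ℝ × ℝ => f q.1 q.2.1 q.2.2) (t, a, b) (0, 0, 1) := by
  funext t a b; exact (hf.hasDeriv2 t a b).deriv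

lemma Smooth3.hpt {f : ℝ → ℝ → ℝ → E} (hf : Smooth3 f) (t a b : ℝ) :
    HasDerivAt (fun s => f s a b) (pt2 f t a b) t := by
  rw [hf.pt2_eq]; exact hf.hasDeriv0 t a b

lemma Smooth3.hd1 {f : ℝ → ℝ → ℝ → E} (hf : Smooth3 f) (t a b : ℝ) :
    HasDerivAt (fun s => f t s b) (dz1 f t a b) a := by
  rw [hf.dz1_eq]; exact hf.hasDeriv1 t a b

lemma Smooth3.hd2 {f : ℝ → ℝ → ℝ → E} (hf : Smooth3 f) (t a b : ℝ) :
    HasDerivAt (fun s => f t a s) (dz2 f t a b) b := by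
  rw [hf.dz2_eq]; exact hf.hasDeriv2 t a b

lemma Smooth3.dir {f : ℝ → ℝ → ℝ → E} (hf : Smooth3 f) (v : ℝ × ℝ × ℝ) :
    Smooth3 (fun t a b =>
      fderiv ℝ (fun q : ℝ × ℝ × ℝ => f q.1 q.2.1 q.2.2) (t, a, b) v) := by
  have h : ContDiff ℝ (⊤ : ℕ∞) (fderiv ℝ (fun q : ℝ × ℝ × ℝ => f q.1 q.2.1 q.2.2)) :=
    ContDiff.fderiv_right (n := ((⊤ : ℕ∞) : WithTop ℕ∞)) hf (by simp)
  exact h.clm_apply contDiff_const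

lemma Smooth3.pt2 {f : ℝ → ℝ → ℝ → E} (hf : Smooth3 f) : Smooth3 (pt2 f) := by
  rw [hf.pt2_eq]; exact hf.dir _

lemma Smooth3.dz1 {f : ℝ → ℝ → ℝ → E} (hf : Smooth3 f) : Smooth3 (dz1 f) := by
  rw [hf.dz1_eq]; exact hf.dir _

lemma Smooth3.dz2 {f : ℝ → ℝ → ℝ → E} (hf : Smooth3 f) : Smooth3 (dz2 f) := by
  rw [hf.dz2_eq]; exact hf.dir _

lemma Smooth3.symm {f : ℝ → ℝ → ℝ → E} (hf : Smooth3 f) (p v w : ℝ × ℝ × ℝ) :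
    fderiv ℝ (fun q : ℝ × ℝ × ℝ =>
      fderiv ℝ (fun q : ℝ × ℝ × ℝ => f q.1 q.2.1 q.2.2) (q.1, q.2.1, q.2.2) v) p w =
    fderiv ℝ (fun q : ℝ × ℝ × ℝ =>
      fderiv ℝ (fun q : ℝ × ℝ × ℝ => f q.1 q.2.1 q.2.2) (q.1, q.2.1, q.2.2) w) p v := by
  have h : ContDiff ℝ (⊤ : ℕ∞) (fderiv ℝ (fun q : ℝ × ℝ × ℝ => f q.1 q.2.1 q.2.2)) :=
    ContDiff.fderiv_right (n := ((⊤ : ℕ∞) : WithTop ℕ∞)) hf (by simp)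
  have hd := (h.differentiable (by simp)) p
  have key : ∀ v w, fderiv ℝ (fun q : ℝ × ℝ × ℝ =>
      fderiv ℝ (fun q : ℝ × ℝ × ℝ => f q.1 q.2.1 q.2.2) q v) p w =
      fderiv ℝ (fderiv ℝ (fun q : ℝ × ℝ × ℝ => f q.1 q.2.1 q.2.2)) p w v := by
    intro v w
    rw [fderiv_clm_apply hd (differentiableAt_const v)]
    simp
  have hs : IsSymmSndFDerivAt ℝ (fun q : ℝ × ℝ × ℝ => f q.1 q.2.1 q.2.2) p :=
    (ContDiff.contDiffAt hf).isSymmSndFDerivAt (by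
      rw [minSmoothness_of_isRCLikeNormedField]; exact WithTop.coe_le_coe.2 (le_top : (2 : ℕ∞) ≤ ⊤))
  show fderiv ℝ (fun q : ℝ × ℝ × ℝ =>
      fderiv ℝ (fun q : ℝ × ℝ × ℝ => f q.1 q.2.1 q.2.2) q v) p w = fderiv ℝ (fun q : ℝ × ℝ × ℝ =>
      fderiv ℝ (fun q : ℝ × ℝ × ℝ => f q.1 q.2.1 q.2.2) q w) p v
  rw [key, key]
  exact hs.eq w v

lemma Smooth3.comm12 {f : ℝ → ℝ → ℝ → E} (hf : Smooth3 f) :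
    _root_.dz1 (_root_.dz2 f) = _root_.dz2 (_root_.dz1 f) := by
  rw [hf.dz2.dz1_eq, hf.dz1.dz2_eq, hf.dz1_eq, hf.dz2_eq]
  funext t a b; exact hf.symm _ _ _

lemma Smooth3.comm01 {f : ℝ → ℝ → ℝ → E} (hf : Smooth3 f) :
    _root_.pt2 (_root_.dz1 f) = _root_.dz1 (_root_.pt2 f) := by
  rw [hf.dz1.pt2_eq, hf.pt2.dz1_eq, hf.dz1_eq, hf.pt2_eq]
  funext t a b; exact hf.symm _ _ _

lemma Smooth3.comm02 {f : ℝ → ℝ → ℝ → E} (hf : Smooth3 f) :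
    _root_.pt2 (_root_.dz2 f) = _root_.dz2 (_root_.pt2 f) := by
  rw [hf.dz2.pt2_eq, hf.pt2.dz2_eq, hf.dz2_eq, hf.pt2_eq]
  funext t a b; exact hf.symm _ _ _

lemma Smooth3.add {f g : ℝ → ℝ → ℝ → E} (hf : Smooth3 f) (hg : Smooth3 g) :
    Smooth3 (fun t a b => f t a b + g t a b) := ContDiff.add hf hg

lemma Smooth3.sub {f g : ℝ → ℝ → ℝ → E} (hf : Smooth3 f) (hg : Smooth3 g) :
    Smooth3 (fun t a b => f t a b - g t a b) := ContDiff.sub hf hg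

lemma Smooth3.mul {f g : ℝ → ℝ → ℝ → ℝ} (hf : Smooth3 f) (hg : Smooth3 g) :
    Smooth3 (fun t a b => f t a b * g t a b) := ContDiff.mul hf hg

lemma Smooth3.sum {ι : Type*} [Fintype ι] {f : ι → ℝ → ℝ → ℝ → E} (hf : ∀ i, Smooth3 (f i)) :
    Smooth3 (fun t a b => ∑ i, f i t a b) :=
  ContDiff.sum (fun i _ => hf i)

lemma Smooth3.cont {f : ℝ → ℝ → ℝ → E} (hf : Smooth3 f) :
    Continuous (fun q : ℝ × ℝ × ℝ => f q.1 q.2.1 q.2.2) := ContDiff.continuous hf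

lemma Smooth3.comp' {f : ℝ → ℝ → ℝ → E} (hf : Smooth3 f) {F : Type*} [NormedAddCommGroup F]
    [NormedSpace ℝ F] {g : E → F} (hg : ContDiff ℝ (⊤ : ℕ∞) g) :
    Smooth3 (fun t a b => g (f t a b)) := ContDiff.comp hg hf

/-- One-variable differentiation under the integral sign. -/
lemma hasDerivAt_param (F F' : ℝ → ℝ → ℝ) (L : ℝ)
    (hF : Continuous (Function.uncurry F)) (hF' : Continuous (Function.uncurry F'))
    (h : ∀ t a, HasDerivAt (fun s => F s a) (F' t a) t) (t : ℝ) :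
    HasDerivAt (fun s => ∫ a in (0:ℝ)..L, F s a) (∫ a in (0:ℝ)..L, F' t a) t := by
  obtain ⟨M, hM⟩ := ((isCompact_closedBall t 1).prod (isCompact_uIcc (a := (0:ℝ)) (b := L))).exists_bound_of_continuousOn
    hF'.continuousOn
  have c : ∀ s, Continuous (F s) := fun s => hF.comp (by fun_prop : Continuous fun a => (s, a))
  have c' : ∀ s, Continuous (F' s) := fun s => hF'.comp (by fun_prop : Continuous fun a => (s, a))
  refine (intervalIntegral.hasDerivAt_integral_of_dominated_loc_of_deriv_le
    (bound := fun _ => M) (Metric.closedBall_mem_nhds t one_pos) ?_ ?_ ?_ ?_ ?_ ?_).2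
  · exact Filter.Eventually.of_forall fun s => (c s).aestronglyMeasurable
  · exact (c t).intervalIntegrable _ _
  · exact (c' t).aestronglyMeasurable
  · refine Filter.Eventually.of_forall fun a ha s hs => ?_
    exact hM (s, a) ⟨hs, Set.uIoc_subset_uIcc ha⟩
  · simp
  · exact Filter.Eventually.of_forall fun a ha s hs => h s a

lemma Smooth3.hasDerivAt_int {f : ℝ → ℝ → ℝ → ℝ} (hf : Smooth3 f) (L1 L2 t : ℝ) :
    HasDerivAt (fun s => ∫ a in (0:ℝ)..L1, ∫ b in (0:ℝ)..L2, f s a b)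
      (∫ a in (0:ℝ)..L1, ∫ b in (0:ℝ)..L2, _root_.pt2 f t a b) t := by
  have cc : ∀ g : ℝ → ℝ → ℝ → ℝ, Smooth3 g →
      Continuous (Function.uncurry fun s a => ∫ b in (0:ℝ)..L2, g s a b) := by
    intro g hg
    apply intervalIntegral.continuous_parametric_intervalIntegral_of_continuous'
      (f := fun (p : ℝ × ℝ) b => g p.1 p.2 b)
    exact hg.cont.comp (by fun_prop : Continuous fun p : (ℝ × ℝ) × ℝ => (p.1.1, p.1.2, p.2))
  apply hasDerivAt_param (fun s a => ∫ b in (0:ℝ)..L2, f s a b)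
    (fun s a => ∫ b in (0:ℝ)..L2, _root_.pt2 f s a b) L1 (cc _ hf) (cc _ hf.pt2)
  intro s a
  apply hasDerivAt_param (fun s b => f s a b) (fun s b => _root_.pt2 f s a b) L2
  · exact hf.cont.comp (by fun_prop : Continuous fun p : ℝ × ℝ => (p.1, a, p.2))
  · exact hf.pt2.cont.comp (by fun_prop : Continuous fun p : ℝ × ℝ => (p.1, a, p.2))
  · intro s b; exact hf.hpt s a b

lemma Smooth3.contb {f : ℝ → ℝ → ℝ → E} (hf : Smooth3 f) (t a : ℝ) :
    Continuous (fun b => f t a b) :=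
  hf.cont.comp (by fun_prop : Continuous fun b : ℝ => (t, a, b))

lemma Smooth3.conta {f : ℝ → ℝ → ℝ → E} (hf : Smooth3 f) (t b : ℝ) :
    Continuous (fun a => f t a b) :=
  hf.cont.comp (by fun_prop : Continuous fun a : ℝ => (t, a, b))

lemma Smooth3.contab {f : ℝ → ℝ → ℝ → E} (hf : Smooth3 f) (t : ℝ) :
    Continuous (Function.uncurry (fun a b => f t a b)) :=
  hf.cont.comp (by fun_prop : Continuous fun p : ℝ × ℝ => (t, p.1, p.2))

lemma Smooth3.contint {f : ℝ → ℝ → ℝ → ℝ} (hf : Smooth3 f) (t L2 : ℝ) :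
    Continuous (fun a => ∫ b in (0:ℝ)..L2, f t a b) :=
  intervalIntegral.continuous_parametric_intervalIntegral_of_continuous' (hf.contab t) _ _

lemma Smooth3.int2 {f : ℝ → ℝ → ℝ → ℝ} (hf : Smooth3 f) (t a L2 : ℝ) :
    ∫ b in (0:ℝ)..L2, _root_.dz2 f t a b = f t a L2 - f t a 0 :=
  intervalIntegral.integral_eq_sub_of_hasDerivAt (fun b _ => hf.hd2 t a b)
    ((hf.dz2.contb t a).intervalIntegrable _ _)

lemma Smooth3.int1 {f : ℝ → ℝ → ℝ → ℝ} (hf : Smooth3 f) (t b L1 : ℝ) :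
    ∫ a in (0:ℝ)..L1, _root_.dz1 f t a b = f t L1 b - f t 0 b :=
  intervalIntegral.integral_eq_sub_of_hasDerivAt (fun a _ => hf.hd1 t a b)
    ((hf.dz1.conta t b).intervalIntegrable _ _)

lemma Smooth3.swap {f : ℝ → ℝ → ℝ → ℝ} (hf : Smooth3 f) (t L1 L2 : ℝ) :
    ∫ a in (0:ℝ)..L1, ∫ b in (0:ℝ)..L2, f t a b = ∫ b in (0:ℝ)..L2, ∫ a in (0:ℝ)..L1, f t a b := by
  apply MeasureTheory.intervalIntegral_intervalIntegral_swap
  apply IntegrableOn.mono_set (t := Set.uIcc 0 L1 ×ˢ Set.uIcc 0 L2)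
  · exact (hf.contab t).continuousOn.integrableOn_compact (isCompact_uIcc.prod isCompact_uIcc)
  · exact Set.prod_mono Set.uIoc_subset_uIcc Set.uIoc_subset_uIcc

lemma Smooth3.int_add {f g : ℝ → ℝ → ℝ → ℝ} (hf : Smooth3 f) (hg : Smooth3 g) (t L1 L2 : ℝ) :
    ∫ a in (0:ℝ)..L1, ∫ b in (0:ℝ)..L2, (f t a b + g t a b) =
      (∫ a in (0:ℝ)..L1, ∫ b in (0:ℝ)..L2, f t a b) +
      ∫ a in (0:ℝ)..L1, ∫ b in (0:ℝ)..L2, g t a b := by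
  rw [← intervalIntegral.integral_add ((hf.contint t L2).intervalIntegrable _ _)
    ((hg.contint t L2).intervalIntegrable _ _)]
  congr 1; funext a
  exact intervalIntegral.integral_add ((hf.contb t a).intervalIntegrable _ _)
    ((hg.contb t a).intervalIntegrable _ _)

/-- Pointwise integration-by-parts identity. -/
lemma scalar_identity {v c00 c10 c01 c20 c11 c02 : ℝ → ℝ → ℝ → ℝ} (hv : Smooth3 v)
    (h10 : Smooth3 c10) (h01 : Smooth3 c01) (h20 : Smooth3 c20)
    (h11 : Smooth3 c11) (h02 : Smooth3 c02) (t a b : ℝ) :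
    v t a b * c00 t a b + dz1 v t a b * c10 t a b + dz2 v t a b * c01 t a b
      + dz1 (dz1 v) t a b * c20 t a b + dz1 (dz2 v) t a b * c11 t a b
      + dz2 (dz2 v) t a b * c02 t a b =
    v t a b * (c00 t a b - dz1 c10 t a b - dz2 c01 t a b + dz1 (dz1 c20) t a b
      + dz1 (dz2 c11) t a b + dz2 (dz2 c02) t a b)
    + dz1 (fun t a b => v t a b * (c10 t a b - dz1 c20 t a b - dz2 c11 t a b)
        + dz1 v t a b * c20 t a b) t a b
    + dz2 (fun t a b => v t a b * (c01 t a b - dz2 c02 t a b - dz1 c11 t a b)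
        + dz2 v t a b * c02 t a b) t a b
    + dz1 (dz2 (fun t a b => v t a b * c11 t a b)) t a b := by
  have e1 : dz1 (fun t a b => v t a b * (c10 t a b - dz1 c20 t a b - dz2 c11 t a b)
        + dz1 v t a b * c20 t a b) t a b = _ :=
    (((hv.hd1 t a b).mul (((h10.hd1 t a b).sub (h20.dz1.hd1 t a b)).sub (h11.dz2.hd1 t a b))).add
      ((hv.dz1.hd1 t a b).mul (h20.hd1 t a b))).deriv
  have e2 : dz2 (fun t a b => v t a b * (c01 t a b - dz2 c02 t a b - dz1 c11 t a b)
        + dz2 v t a b * c02 t a b) t a b = _ :=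
    (((hv.hd2 t a b).mul (((h01.hd2 t a b).sub (h02.dz2.hd2 t a b)).sub (h11.dz1.hd2 t a b))).add
      ((hv.dz2.hd2 t a b).mul (h02.hd2 t a b))).deriv
  have e3 : dz2 (fun t a b => v t a b * c11 t a b) =
      fun t a b => dz2 v t a b * c11 t a b + v t a b * dz2 c11 t a b := by
    funext t a b
    exact ((hv.hd2 t a b).mul (h11.hd2 t a b)).deriv
  have e4 : dz1 (fun t a b => dz2 v t a b * c11 t a b + v t a b * dz2 c11 t a b) t a b = _ :=
    (((hv.dz2.hd1 t a b).mul (h11.hd1 t a b)).add ((hv.hd1 t a b).mul (h11.dz2.hd1 t a b))).deriv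
  rw [e1, e2, e3, e4, ← h11.comm12]
  simp only [Pi.sub_apply]
  ring

lemma Smooth3.coord {n : ℕ} {x : ℝ → ℝ → ℝ → Fin n → ℝ} (hx : Smooth3 x) (α : Fin n) :
    Smooth3 (fun t a b => x t a b α) := contDiff_pi.1 hx α

lemma Smooth3.dz1_coord {n : ℕ} {x : ℝ → ℝ → ℝ → Fin n → ℝ} (hx : Smooth3 x) (α : Fin n) :
    _root_.dz1 (fun t a b => x t a b α) = fun t a b => _root_.dz1 x t a b α := by
  funext t a b
  exact (hasDerivAt_pi.1 (hx.hd1 t a b) α).deriv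

lemma Smooth3.dz2_coord {n : ℕ} {x : ℝ → ℝ → ℝ → Fin n → ℝ} (hx : Smooth3 x) (α : Fin n) :
    _root_.dz2 (fun t a b => x t a b α) = fun t a b => _root_.dz2 x t a b α := by
  funext t a b
  exact (hasDerivAt_pi.1 (hx.hd2 t a b) α).deriv

lemma dz1_sum {ι : Type*} [Fintype ι] {f : ι → ℝ → ℝ → ℝ → ℝ} (hf : ∀ i, Smooth3 (f i)) :
    dz1 (fun t a b => ∑ i, f i t a b) = fun t a b => ∑ i, dz1 (f i) t a b := by
  funext t a b
  exact (HasDerivAt.fun_sum (fun i _ => (hf i).hd1 t a b)).deriv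

lemma dz2_sum {ι : Type*} [Fintype ι] {f : ι → ℝ → ℝ → ℝ → ℝ} (hf : ∀ i, Smooth3 (f i)) :
    dz2 (fun t a b => ∑ i, f i t a b) = fun t a b => ∑ i, dz2 (f i) t a b := by
  funext t a b
  exact (HasDerivAt.fun_sum (fun i _ => (hf i).hd2 t a b)).deriv

lemma Smooth3.jet {n : ℕ} {x : ℝ → ℝ → ℝ → Fin n → ℝ} (hx : Smooth3 x) : Smooth3 (jet2 x) := by
  have h1 : ContDiff ℝ (⊤ : ℕ∞) (fun q : ℝ × ℝ × ℝ => q.2.1) := by fun_prop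
  have h2 : ContDiff ℝ (⊤ : ℕ∞) (fun q : ℝ × ℝ × ℝ => q.2.2) := by fun_prop
  exact h1.prodMk (h2.prodMk (ContDiff.prodMk hx (ContDiff.prodMk hx.dz1 (ContDiff.prodMk hx.dz2
    (ContDiff.prodMk hx.dz1.dz1 (ContDiff.prodMk hx.dz2.dz1 hx.dz2.dz2))))))

lemma Smooth3.sl {n : ℕ} {x : ℝ → ℝ → ℝ → Fin n → ℝ} (hx : Smooth3 x) {C : Jet2 n → ℝ}
    (hC : ContDiff ℝ (⊤ : ℕ∞) C) (e : Jet2 n) :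
    Smooth3 (fun t a b => fderiv ℝ C (jet2 x t a b) e) := by
  have h : ContDiff ℝ (⊤ : ℕ∞) (fun j => fderiv ℝ C j e) :=
    (ContDiff.fderiv_right (n := ((⊤ : ℕ∞) : WithTop ℕ∞)) hC (by simp)).clm_apply contDiff_const
  exact hx.jet.comp' h

lemma lin_decomp {n : ℕ} (T : Jet2 n →L[ℝ] ℝ) (v0 v1 v2 v3 v4 v5 : Fin n → ℝ) :
    T (0, 0, v0, v1, v2, v3, v4, v5) = ∑ α : Fin n,
      (v0 α * T (0, 0, Pi.single α 1, 0, 0, 0, 0, 0)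
      + v1 α * T (0, 0, 0, Pi.single α 1, 0, 0, 0, 0)
      + v2 α * T (0, 0, 0, 0, Pi.single α 1, 0, 0, 0)
      + v3 α * T (0, 0, 0, 0, 0, Pi.single α 1, 0, 0)
      + v4 α * T (0, 0, 0, 0, 0, 0, Pi.single α 1, 0)
      + v5 α * T (0, 0, 0, 0, 0, 0, 0, Pi.single α 1)) := by
  have key : ((0, 0, v0, v1, v2, v3, v4, v5) : Jet2 n) = ∑ α : Fin n,
      (v0 α • ((0, 0, Pi.single α 1, 0, 0, 0, 0, 0) : Jet2 n)
      + v1 α • ((0, 0, 0, Pi.single α 1, 0, 0, 0, 0) : Jet2 n)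
      + v2 α • ((0, 0, 0, 0, Pi.single α 1, 0, 0, 0) : Jet2 n)
      + v3 α • ((0, 0, 0, 0, 0, Pi.single α 1, 0, 0) : Jet2 n)
      + v4 α • ((0, 0, 0, 0, 0, 0, Pi.single α 1, 0) : Jet2 n)
      + v5 α • ((0, 0, 0, 0, 0, 0, 0, Pi.single α 1) : Jet2 n)) := by
    have hs : ∀ v : Fin n → ℝ, v = ∑ α, v α • (Pi.single α 1 : Fin n → ℝ) := by
      intro v
      funext i
      simp [Finset.sum_apply, Pi.single_apply]
    simp only [Prod.smul_mk, Prod.mk_add_mk, smul_zero, add_zero, zero_add]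
    refine Prod.ext ?_ (Prod.ext ?_ (Prod.ext ?_ (Prod.ext ?_ (Prod.ext ?_ (Prod.ext ?_
      (Prod.ext ?_ ?_)))))) <;> simp only [Prod.fst_sum, Prod.snd_sum]
    · simp
    · simp
    all_goals exact hs _
  rw [key, map_sum]
  simp only [map_add, map_smul, smul_eq_mul]

lemma pt2_density {n : ℕ} {x : ℝ → ℝ → ℝ → Fin n → ℝ} (hx : Smooth3 x) {C : Jet2 n → ℝ}
    (hC : ContDiff ℝ (⊤ : ℕ∞) C) (t a b : ℝ) :
    pt2 (fun t a b => C (jet2 x t a b)) t a b =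
      (∑ α, pt2 x t a b α * varDer2 C x α t a b) + dz1 (edge1 C x) t a b + dz2 (edge2 C x) t a b
        + dz1 (dz2 (corner2 C x)) t a b := by
  have hj : HasDerivAt (fun s => jet2 x s a b) ((0, 0, pt2 x t a b, pt2 (dz1 x) t a b,
      pt2 (dz2 x) t a b, pt2 (dz1 (dz1 x)) t a b, pt2 (dz1 (dz2 x)) t a b,
      pt2 (dz2 (dz2 x)) t a b) : Jet2 n) t :=
    (hasDerivAt_const t a).prodMk ((hasDerivAt_const t b).prodMk ((hx.hpt t a b).prodMk
      ((hx.dz1.hpt t a b).prodMk ((hx.dz2.hpt t a b).prodMk ((hx.dz1.dz1.hpt t a b).prodMk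
        ((hx.dz2.dz1.hpt t a b).prodMk (hx.dz2.dz2.hpt t a b)))))))
  have hcd : HasDerivAt (fun s => C (jet2 x s a b)) _ t :=
    ((hC.differentiable (by simp)) (jet2 x t a b)).hasFDerivAt.comp_hasDerivAt t hj
  have h0 : pt2 (fun t a b => C (jet2 x t a b)) t a b = _ := hcd.deriv
  have hv : ∀ α, Smooth3 (fun t a b => pt2 x t a b α) := fun α => hx.pt2.coord α
  have hv1 : ∀ α, Smooth3 (fun t a b => pt2 (dz1 x) t a b α) := fun α => hx.dz1.pt2.coord α
  have hv2 : ∀ α, Smooth3 (fun t a b => pt2 (dz2 x) t a b α) := fun α => hx.dz2.pt2.coord α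
  have s10 : ∀ α, Smooth3 (sl10 C x α) := fun α => hx.sl hC _
  have s01 : ∀ α, Smooth3 (sl01 C x α) := fun α => hx.sl hC _
  have s20 : ∀ α, Smooth3 (sl20 C x α) := fun α => hx.sl hC _
  have s11 : ∀ α, Smooth3 (sl11 C x α) := fun α => hx.sl hC _
  have s02 : ∀ α, Smooth3 (sl02 C x α) := fun α => hx.sl hC _
  have E1 : dz1 (edge1 C x) = _ := dz1_sum (fun α =>
    ((hv α).mul (((s10 α).sub (s20 α).dz1).sub (s11 α).dz2)).add ((hv1 α).mul (s20 α)))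
  have E2 : dz2 (edge2 C x) = _ := dz2_sum (fun α =>
    ((hv α).mul (((s01 α).sub (s02 α).dz2).sub (s11 α).dz1)).add ((hv2 α).mul (s02 α)))
  have E3 : dz2 (corner2 C x) = _ := dz2_sum (fun α => (hv α).mul (s11 α))
  have E4 := dz1_sum (fun α => ((hv α).mul (s11 α)).dz2)
  rw [h0, lin_decomp, E1, E2, E3, E4, ← Finset.sum_add_distrib, ← Finset.sum_add_distrib,
    ← Finset.sum_add_distrib]
  refine Finset.sum_congr rfl fun α _ => ?_
  have key := scalar_identity (c00 := sl00 C x α) (hv α) (s10 α) (s01 α) (s20 α) (s11 α) (s02 α)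
    t a b
  have k1 : dz1 (fun t a b => pt2 x t a b α) = fun t a b => pt2 (dz1 x) t a b α := by
    rw [hx.pt2.dz1_coord, hx.comm01]
  have k2 : dz2 (fun t a b => pt2 x t a b α) = fun t a b => pt2 (dz2 x) t a b α := by
    rw [hx.pt2.dz2_coord, hx.comm02]
  have k11 : dz1 (fun t a b => pt2 (dz1 x) t a b α) = fun t a b => pt2 (dz1 (dz1 x)) t a b α := by
    rw [hx.dz1.pt2.dz1_coord, hx.dz1.comm01]
  have k12 : dz1 (fun t a b => pt2 (dz2 x) t a b α) = fun t a b => pt2 (dz1 (dz2 x)) t a b α := by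
    rw [hx.dz2.pt2.dz1_coord, hx.dz2.comm01]
  have k22 : dz2 (fun t a b => pt2 (dz2 x) t a b α) = fun t a b => pt2 (dz2 (dz2 x)) t a b α := by
    rw [hx.dz2.pt2.dz2_coord, hx.dz2.comm02]
  rw [k1, k2, k11, k12, k22] at key
  exact key

lemma Smooth3.varDer {n : ℕ} {x : ℝ → ℝ → ℝ → Fin n → ℝ} (hx : Smooth3 x) {C : Jet2 n → ℝ}
    (hC : ContDiff ℝ (⊤ : ℕ∞) C) (α : Fin n) : Smooth3 (varDer2 C x α) :=
  ((((Smooth3.sub (Smooth3.sub (hx.sl hC _) (Smooth3.dz1 (hx.sl hC _)))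
    (Smooth3.dz2 (hx.sl hC _))).add (Smooth3.dz1 (Smooth3.dz1 (hx.sl hC _)))).add
    (Smooth3.dz1 (Smooth3.dz2 (hx.sl hC _)))).add (Smooth3.dz2 (Smooth3.dz2 (hx.sl hC _))))

end Aux

/-- Casimir conditions, 2-dimensional spatial domain: under the
conditions (a)–(d), the functional `𝒞(t) = x_c^λ(t) + ∬_B 𝒞[x] dz¹dz²` is a
structural invariant of the closed loop. -/
theorem statement5 {n l nc : ℕ} (L1 L2 : ℝ) (hL1 : 0 < L1) (hL2 : 0 < L2)
    (H : Jet2 n → ℝ) (hH : ContDiff ℝ (⊤ : ℕ∞) H)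
    (x : ℝ → ℝ → ℝ → Fin n → ℝ)
    (hx : ContDiff ℝ (⊤ : ℕ∞) (fun q : ℝ × ℝ × ℝ => x q.1 q.2.1 q.2.2))
    (J R : Fin n → Fin n → ℝ → ℝ → ℝ → ℝ)
    (G : Fin n → Fin l → ℝ → ℝ → ℝ → ℝ)
    (hJ : ∀ α β, ContDiff ℝ (⊤ : ℕ∞) (fun q : ℝ × ℝ × ℝ => J α β q.1 q.2.1 q.2.2))
    (hR : ∀ α β, ContDiff ℝ (⊤ : ℕ∞) (fun q : ℝ × ℝ × ℝ => R α β q.1 q.2.1 q.2.2))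
    (hG : ∀ α ξ, ContDiff ℝ (⊤ : ℕ∞) (fun q : ℝ × ℝ × ℝ => G α ξ q.1 q.2.1 q.2.2))
    (u : Fin l → ℝ → ℝ)
    -- the plant dynamics hold on `B`
    (hdyn : ∀ t, ∀ a ∈ Set.Icc (0:ℝ) L1, ∀ b ∈ Set.Icc (0:ℝ) L2, ∀ α,
      pt2 x t a b α =
        (∑ β : Fin n, (J α β t a b - R α β t a b) * varDer2 H x β t a b)
          + ∑ ξ : Fin l, G α ξ t a b * u ξ t)
    -- the finite-dimensional port-Hamiltonian controller
    (Hc : (Fin nc → ℝ) → ℝ) (hHc : ContDiff ℝ (⊤ : ℕ∞) Hc)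
    (Jc Rc : Fin nc → Fin nc → ℝ) (Gc : Fin nc → Fin l → ℝ)
    (xc : ℝ → Fin nc → ℝ)
    (uc : Fin l → ℝ → ℝ)
    (hcdyn : ∀ t αc, HasDerivAt (fun τ => xc τ αc)
      ((∑ βc : Fin nc, (Jc αc βc - Rc αc βc) * gradC Hc xc βc t)
        + ∑ ξ : Fin l, Gc αc ξ * uc ξ t) t)
    -- the interconnection with a constant matrix `K`
    (K : Fin l → Fin l → ℝ)
    (huc : ∀ ξ t, uc ξ t = ∑ η : Fin l, K ξ η *
      (∫ a in (0:ℝ)..L1, ∫ b in (0:ℝ)..L2,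
        ∑ α : Fin n, G α η t a b * varDer2 H x α t a b))
    (hu : ∀ ξ t, u ξ t = -∑ η : Fin l, K ξ η *
      (∑ βc : Fin nc, Gc βc η * gradC Hc xc βc t))
    -- the Casimir candidate: a smooth second-order density and a controller index
    (lam : Fin nc) (C : Jet2 n → ℝ) (hC : ContDiff ℝ (⊤ : ℕ∞) C)
    -- (a)
    (ha : ∀ βc, Jc lam βc - Rc lam βc = 0)
    -- (b)
    (hb : ∀ t, ∀ a ∈ Set.Icc (0:ℝ) L1, ∀ b ∈ Set.Icc (0:ℝ) L2, ∀ β,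
      (∑ α : Fin n, varDer2 C x α t a b * (J α β t a b - R α β t a b))
        + ∑ ξ : Fin l, ∑ η : Fin l, Gc lam ξ * K ξ η * G β η t a b = 0)
    -- (c)
    (hc : ∀ t, ∀ a ∈ Set.Icc (0:ℝ) L1, ∀ b ∈ Set.Icc (0:ℝ) L2, ∀ αc,
      ∑ α : Fin n, ∑ ξ : Fin l, ∑ η : Fin l,
        varDer2 C x α t a b * G α ξ t a b * K ξ η * Gc αc η = 0)
    -- (d): the boundary contributions of `C` vanish along the solution
    (hd1 : ∀ t, ∀ b ∈ Set.Icc (0:ℝ) L2, edge1 C x t 0 b = 0 ∧ edge1 C x t L1 b = 0)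
    (hd2 : ∀ t, ∀ a ∈ Set.Icc (0:ℝ) L1, edge2 C x t a 0 = 0 ∧ edge2 C x t a L2 = 0)
    (hdc : ∀ t, corner2 C x t 0 0 = 0 ∧ corner2 C x t L1 0 = 0
      ∧ corner2 C x t 0 L2 = 0 ∧ corner2 C x t L1 L2 = 0) :
    ∀ t s : ℝ,
      xc t lam + (∫ a in (0:ℝ)..L1, ∫ b in (0:ℝ)..L2, C (jet2 x t a b))
        = xc s lam + (∫ a in (0:ℝ)..L1, ∫ b in (0:ℝ)..L2, C (jet2 x s a b)) := by
  have hx' : Smooth3 x := hx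
  have hv : ∀ α, Smooth3 (fun t a b => pt2 x t a b α) := fun α => hx'.pt2.coord α
  have hv1 : ∀ α, Smooth3 (fun t a b => pt2 (dz1 x) t a b α) := fun α => hx'.dz1.pt2.coord α
  have hv2 : ∀ α, Smooth3 (fun t a b => pt2 (dz2 x) t a b α) := fun α => hx'.dz2.pt2.coord α
  have s10 : ∀ α, Smooth3 (sl10 C x α) := fun α => hx'.sl hC _
  have s01 : ∀ α, Smooth3 (sl01 C x α) := fun α => hx'.sl hC _
  have s20 : ∀ α, Smooth3 (sl20 C x α) := fun α => hx'.sl hC _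
  have s11 : ∀ α, Smooth3 (sl11 C x α) := fun α => hx'.sl hC _
  have s02 : ∀ α, Smooth3 (sl02 C x α) := fun α => hx'.sl hC _
  have hE1 : Smooth3 (edge1 C x) := Smooth3.sum (fun α =>
    ((hv α).mul (((s10 α).sub (s20 α).dz1).sub (s11 α).dz2)).add ((hv1 α).mul (s20 α)))
  have hE2 : Smooth3 (edge2 C x) := Smooth3.sum (fun α =>
    ((hv α).mul (((s01 α).sub (s02 α).dz2).sub (s11 α).dz1)).add ((hv2 α).mul (s02 α)))
  have hE3 : Smooth3 (corner2 C x) := Smooth3.sum (fun α => (hv α).mul (s11 α))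
  have hW : Smooth3 (fun t a b => ∑ α, pt2 x t a b α * varDer2 C x α t a b) :=
    Smooth3.sum (fun α => (hv α).mul (hx'.varDer hC α))
  have hY : ∀ η, Smooth3 (fun t a b => ∑ α, G α η t a b * varDer2 H x α t a b) :=
    fun η => Smooth3.sum (fun α => Smooth3.mul (hG α η) (hx'.varDer hH α))
  -- the time derivative of the integral of the density
  have hI : ∀ t, ∫ a in (0:ℝ)..L1, ∫ b in (0:ℝ)..L2, pt2 (fun t a b => C (jet2 x t a b)) t a b
      = ∫ a in (0:ℝ)..L1, ∫ b in (0:ℝ)..L2, ∑ α, pt2 x t a b α * varDer2 C x α t a b := by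
    intro t
    simp_rw [pt2_density hx' hC]
    rw [Smooth3.int_add ((hW.add hE1.dz1).add hE2.dz2) hE3.dz2.dz1,
      Smooth3.int_add (hW.add hE1.dz1) hE2.dz2, Smooth3.int_add hW hE1.dz1]
    have i1 : ∫ a in (0:ℝ)..L1, ∫ b in (0:ℝ)..L2, dz1 (edge1 C x) t a b = 0 := by
      rw [hE1.dz1.swap]
      simp_rw [hE1.int1]
      rw [intervalIntegral.integral_congr (g := fun _ => (0:ℝ))]
      · simp
      · intro b hb'
        rw [Set.uIcc_of_le hL2.le] at hb'
        simp [(hd1 t b hb').1, (hd1 t b hb').2]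
    have i2 : ∫ a in (0:ℝ)..L1, ∫ b in (0:ℝ)..L2, dz2 (edge2 C x) t a b = 0 := by
      simp_rw [hE2.int2]
      rw [intervalIntegral.integral_congr (g := fun _ => (0:ℝ))]
      · simp
      · intro b hb'
        rw [Set.uIcc_of_le hL1.le] at hb'
        simp [(hd2 t b hb').1, (hd2 t b hb').2]
    have i3 : ∫ a in (0:ℝ)..L1, ∫ b in (0:ℝ)..L2, dz1 (dz2 (corner2 C x)) t a b = 0 := by
      rw [hE3.comm12]
      simp_rw [hE3.dz1.int2]
      rw [intervalIntegral.integral_sub ((hE3.dz1.conta t L2).intervalIntegrable _ _)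
        ((hE3.dz1.conta t 0).intervalIntegrable _ _), hE3.int1, hE3.int1]
      obtain ⟨h1, h2, h3, h4⟩ := hdc t
      rw [h1, h2, h3, h4]; simp
    rw [i1, i2, i3]; simp
  -- use of the dynamics and conditions (b), (c)
  have hP : ∀ t, ∀ a ∈ Set.Icc (0:ℝ) L1, ∀ b ∈ Set.Icc (0:ℝ) L2,
      ∑ α, pt2 x t a b α * varDer2 C x α t a b =
      ∑ η, (-∑ ξ, Gc lam ξ * K ξ η) * ∑ α, G α η t a b * varDer2 H x α t a b := by
    intro t a ha' b hb'
    have hu0 : ∑ α, varDer2 C x α t a b * ∑ ξ, G α ξ t a b * u ξ t = 0 := by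
      have : ∑ α, varDer2 C x α t a b * ∑ ξ, G α ξ t a b * u ξ t =
          -∑ βc, gradC Hc xc βc t * ∑ α : Fin n, ∑ ξ : Fin l, ∑ η : Fin l,
            varDer2 C x α t a b * G α ξ t a b * K ξ η * Gc βc η := by
        simp only [hu, Finset.mul_sum, mul_neg, Finset.sum_neg_distrib]
        congr 1
        symm
        rw [Finset.sum_comm]
        refine Finset.sum_congr rfl fun α _ => ?_
        rw [Finset.sum_comm]
        refine Finset.sum_congr rfl fun ξ _ => ?_
        rw [Finset.sum_comm]
        refine Finset.sum_congr rfl fun η _ => ?_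
        refine Finset.sum_congr rfl fun βc _ => ?_
        ring
      rw [this]
      simp [hc t a ha' b hb']
    have hb0 : ∀ β, ∑ α, varDer2 C x α t a b * (J α β t a b - R α β t a b) =
        -∑ ξ : Fin l, ∑ η : Fin l, Gc lam ξ * K ξ η * G β η t a b :=
      fun β => eq_neg_of_add_eq_zero_left (hb t a ha' b hb' β)
    calc ∑ α, pt2 x t a b α * varDer2 C x α t a b
        = ∑ β, (∑ α, varDer2 C x α t a b * (J α β t a b - R α β t a b)) * varDer2 H x β t a b
          + ∑ α, varDer2 C x α t a b * ∑ ξ, G α ξ t a b * u ξ t := by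
          simp_rw [hdyn t a ha' b hb', add_mul, Finset.sum_add_distrib]
          congr 1
          · simp_rw [Finset.sum_mul]
            rw [Finset.sum_comm]
            refine Finset.sum_congr rfl fun β _ => Finset.sum_congr rfl fun α _ => ?_
            ring
          · refine Finset.sum_congr rfl fun α _ => ?_
            ring
      _ = _ := by
          rw [hu0, add_zero]
          simp only [hb0, neg_mul, Finset.sum_neg_distrib, Finset.sum_mul, Finset.mul_sum]
          congr 1
          calc _ = ∑ β : Fin n, ∑ η : Fin l, ∑ ξ : Fin l,
                Gc lam ξ * K ξ η * G β η t a b * varDer2 H x β t a b :=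
                Finset.sum_congr rfl fun β _ => Finset.sum_comm
            _ = _ := by
                rw [Finset.sum_comm]
                refine Finset.sum_congr rfl fun η _ => ?_
                refine Finset.sum_congr rfl fun β _ => ?_
                refine Finset.sum_congr rfl fun ξ _ => ?_
                ring
  have hI2 : ∀ t, ∫ a in (0:ℝ)..L1, ∫ b in (0:ℝ)..L2,
      ∑ α, pt2 x t a b α * varDer2 C x α t a b =
      -∑ ξ, Gc lam ξ * uc ξ t := by
    intro t
    have e : ∫ a in (0:ℝ)..L1, ∫ b in (0:ℝ)..L2,
        ∑ α, pt2 x t a b α * varDer2 C x α t a b = ∫ a in (0:ℝ)..L1, ∫ b in (0:ℝ)..L2,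
        ∑ η, (-∑ ξ, Gc lam ξ * K ξ η) * ∑ α, G α η t a b * varDer2 H x α t a b := by
      refine intervalIntegral.integral_congr fun a ha' => ?_
      refine intervalIntegral.integral_congr fun b hb' => ?_
      rw [Set.uIcc_of_le hL1.le] at ha'
      rw [Set.uIcc_of_le hL2.le] at hb'
      exact hP t a ha' b hb'
    rw [e]
    have e2 : ∀ a, ∫ b in (0:ℝ)..L2,
        ∑ η, (-∑ ξ, Gc lam ξ * K ξ η) * ∑ α, G α η t a b * varDer2 H x α t a b =
        ∑ η, (-∑ ξ, Gc lam ξ * K ξ η) *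
          ∫ b in (0:ℝ)..L2, ∑ α, G α η t a b * varDer2 H x α t a b := by
      intro a
      rw [intervalIntegral.integral_finsetSum]
      · simp_rw [intervalIntegral.integral_const_mul]
      · intro η _
        exact (((hY η).contb t a).const_mul _).intervalIntegrable _ _
    simp_rw [e2]
    rw [intervalIntegral.integral_finsetSum]
    · simp_rw [intervalIntegral.integral_const_mul, huc, neg_mul, Finset.sum_neg_distrib,
        Finset.sum_mul, Finset.mul_sum]
      congr 1
      rw [Finset.sum_comm]
      refine Finset.sum_congr rfl fun ξ _ => Finset.sum_congr rfl fun η _ => ?_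
      ring
    · intro η _
      exact (((hY η).contint t L2).const_mul _).intervalIntegrable _ _
  have hD : ∀ t, HasDerivAt (fun t => xc t lam +
      ∫ a in (0:ℝ)..L1, ∫ b in (0:ℝ)..L2, C (jet2 x t a b)) 0 t := by
    intro t
    have h1 := hcdyn t lam
    have h2 := Smooth3.hasDerivAt_int (hx'.jet.comp' hC) L1 L2 t
    rw [hI, hI2] at h2
    have h3 := h1.add h2
    simp only [ha, zero_mul, Finset.sum_const_zero, zero_add, add_neg_cancel] at h3
    exact h3
  intro t s
  exact is_const_of_deriv_eq_zero (fun t => (hD t).differentiableAt) (fun t => (hD t).deriv) t s
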